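/- Let m, n be natural numbers with 0 ≤ m ≤ n, and let x > 1 be real. Then d^m/dx^m [P_n(x)·log(x−1)] = P_n^{(m)}(x)·log(x−1) + (ψ(n+m+1) − ψ(n−m+1))·P_n^{(m)}(x) − (−1)^{n+m}·2^{−m} Σ_{k=0}^{n−m} (−1)^k·((k+n+m)!/(k!·(k+m)!·(n−m−k)!))·(2ψ(k+n+m+1) − ψ(k+m+1)) · ((x+1)/2)^k + (−1)^n·((n+m)!/(n−m)!)·(x−1)^{−m} Σ_{k=0}^{n} (−1)^k·((k+n)!/(k!·(k+m)!·(n−k)!))·(2ψ(k+n+1) − ψ(k+m+1)) · ((x+1)/2)^k. -/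

import Mathlib

open Finset Real

/-- The Legendre polynomial `P_n`, via its explicit expansion
`P_n(x) = ∑_{k=0}^{n} ((n+k)!/((k!)² (n−k)!)) ((x−1)/2)^k`. -/
noncomputable def legendreP (n : ℕ) (x : ℝ) : ℝ :=
  ∑ k ∈ Finset.range (n + 1),
    (((n + k).factorial : ℝ) / (((k.factorial : ℝ)) ^ 2 * ((n - k).factorial : ℝ))) *
      ((x - 1) / 2) ^ k

/-- The harmonic number `H_i = ∑_{r=1}^{i} 1/r`. -/
noncomputable def harm (i : ℕ) : ℝ := ∑ r ∈ Finset.range i, (1 : ℝ) / (r + 1)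

/-- The digamma function at a positive integer `j`: `ψ(j) = H_{j−1} − γ`. -/
noncomputable def psi (j : ℕ) : ℝ := harm (j - 1) - Real.eulerMascheroniConstant

noncomputable def cU (n m k : ℕ) : ℝ :=
  (-1 : ℝ) ^ k * ((k + n).factorial : ℝ) /
    ((k.factorial : ℝ) * ((k + m).factorial : ℝ) * ((n - k).factorial : ℝ))

lemma cU_succ_left (n m k : ℕ) (hk : k < n) :
    cU n m (k + 1) * ((k : ℝ) + 1)
      = - (cU n m k * (((k : ℝ) + n + 1) * ((n : ℝ) - k) / ((k : ℝ) + m + 1))) := by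
  obtain ⟨d, rfl⟩ : ∃ d, n = k + 1 + d := ⟨n - (k + 1), by omega⟩
  unfold cU
  have e1 : k + 1 + d - (k + 1) = d := by omega
  have e2 : k + 1 + d - k = d + 1 := by omega
  have e3 : k + 1 + (k + 1 + d) = (k + (k + 1 + d)) + 1 := by omega
  have e4 : k + 1 + m = (k + m) + 1 := by omega
  rw [e1, e2, e3, e4, Nat.factorial_succ (k + (k + 1 + d)), Nat.factorial_succ (k + m),
    Nat.factorial_succ k, Nat.factorial_succ d]
  have h1 : ((k.factorial : ℝ)) ≠ 0 := by positivity
  have h2 : ((d.factorial : ℝ)) ≠ 0 := by positivity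
  have h3 : (((k + m).factorial : ℝ)) ≠ 0 := by positivity
  have h4 : (k : ℝ) + 1 ≠ 0 := by positivity
  have h5 : (d : ℝ) + 1 ≠ 0 := by positivity
  have h6 : (k : ℝ) + m + 1 ≠ 0 := by positivity
  push_cast
  field_simp
  ring

lemma cU_succ_right (n m k : ℕ) :
    cU n (m + 1) k = cU n m k / ((k : ℝ) + m + 1) := by
  unfold cU
  have e4 : k + (m + 1) = (k + m) + 1 := by omega
  rw [e4, Nat.factorial_succ (k + m)]
  have h6 : (k : ℝ) + m + 1 ≠ 0 := by positivity
  push_cast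
  field_simp

/-- Derivative ladder for the sums divided by a power of `x - 1`. -/
lemma ladder (n m : ℕ) (h : ℕ → ℝ) (x : ℝ) (hx : 1 < x) :
    HasDerivAt (fun y : ℝ => (y - 1) ^ (-(m : ℤ)) *
        ∑ k ∈ Finset.range (n + 1), cU n m k * h k * ((y + 1) / 2) ^ k)
      ((x - 1) ^ (-((m + 1 : ℕ) : ℤ)) *
        ∑ k ∈ Finset.range (n + 1), cU n m k *
          (((k : ℝ) - m) * h k + ((k : ℝ) + n + 1) * ((n : ℝ) - k) / ((k : ℝ) + m + 1) * h (k + 1))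
            * ((x + 1) / 2) ^ k) x := by
  have hx0 : x - 1 ≠ 0 := by linarith
  set s := (x + 1) / 2 with hs
  set E := ∑ k ∈ Finset.range (n + 1), cU n m k * h k * ((k : ℝ) * s ^ (k - 1)) with hE
  have d1 : HasDerivAt (fun y : ℝ => ∑ k ∈ Finset.range (n + 1), cU n m k * h k * ((y + 1) / 2) ^ k)
      (E / 2) x := by
    have : HasDerivAt (fun y : ℝ => ∑ k ∈ Finset.range (n + 1), cU n m k * h k * ((y + 1) / 2) ^ k)
      (∑ k ∈ Finset.range (n + 1), cU n m k * h k * ((k : ℝ) * s ^ (k - 1) * (1 / 2))) x := by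
      apply HasDerivAt.fun_sum
      intro k _
      apply HasDerivAt.const_mul
      exact (((hasDerivAt_id x).add_const 1).div_const 2).pow k
    convert this using 1
    rw [hE, Finset.sum_div]
    refine Finset.sum_congr rfl fun k _ => by ring
  have d2 : HasDerivAt (fun y : ℝ => (y - 1) ^ (-(m : ℤ)))
      (((-(m : ℤ) : ℤ) : ℝ) * (x - 1) ^ (-(m : ℤ) - 1) * 1) x := by
    exact (hasDerivAt_zpow (-(m : ℤ)) (x - 1) (Or.inl hx0)).comp x ((hasDerivAt_id x).sub_const 1)
  have hW : s * E = ∑ k ∈ Finset.range (n + 1), cU n m k * ((k : ℝ) * h k) * s ^ k := by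
    rw [hE, Finset.mul_sum]
    refine Finset.sum_congr rfl fun k _ => ?_
    rcases k with _ | k
    · simp
    · rw [Nat.add_sub_cancel]; ring
  have hV : E = - ∑ k ∈ Finset.range (n + 1), cU n m k *
      (((k : ℝ) + n + 1) * ((n : ℝ) - k) / ((k : ℝ) + m + 1) * h (k + 1)) * s ^ k := by
    rw [hE, Finset.sum_range_succ', Finset.sum_range_succ]
    simp only [sub_self, mul_zero, zero_div, zero_mul, Nat.cast_zero, add_zero]
    rw [← Finset.sum_neg_distrib]
    refine Finset.sum_congr rfl fun k hk => ?_
    have := cU_succ_left n m k (Finset.mem_range.1 hk)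
    rw [Nat.add_sub_cancel]
    push_cast
    linear_combination (h (k + 1) * s ^ k) * this
  refine (d2.fun_mul d1).congr_deriv ?_
  symm
  have e : (-((m + 1 : ℕ) : ℤ)) = -(m : ℤ) - 1 := by push_cast; ring
  have e' : (x - 1) ^ (-(m : ℤ)) = (x - 1) ^ (-(m : ℤ) - 1) * (2 * (s - 1)) := by
    rw [zpow_sub_one₀ hx0, hs]; field_simp; ring
  rw [e, e']
  have key : ∑ k ∈ Finset.range (n + 1), cU n m k *
          (((k : ℝ) - m) * h k + ((k : ℝ) + n + 1) * ((n : ℝ) - k) / ((k : ℝ) + m + 1) * h (k + 1))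
            * s ^ k = (s - 1) * E - m * ∑ k ∈ Finset.range (n + 1), cU n m k * h k * s ^ k := by
    have : (s - 1) * E = s * E - E := by ring
    rw [this, hW]
    rw [hV, sub_neg_eq_add, ← Finset.sum_add_distrib, Finset.mul_sum, ← Finset.sum_sub_distrib]
    refine Finset.sum_congr rfl fun k hk => by ring
  rw [key]
  push_cast
  ring

lemma legendreP_symm (n : ℕ) (x : ℝ) :
    legendreP n x = (-1) ^ n * ∑ k ∈ Finset.range (n + 1), cU n 0 k * ((x + 1) / 2) ^ k := by
  have key : ∀ y : ℝ, Polynomial.aeval y (Polynomial.shiftedLegendre n)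
      = ∑ k ∈ Finset.range (n + 1), cU n 0 k * y ^ k := by
    intro y
    rw [Polynomial.shiftedLegendre, map_sum]
    refine Finset.sum_congr rfl fun k hk => ?_
    have hk' : k ≤ n := by have := Finset.mem_range.1 hk; omega
    simp only [map_mul, map_pow, Polynomial.aeval_X, map_neg, map_one, map_natCast]
    rw [Nat.cast_choose ℝ hk', Nat.cast_choose ℝ (Nat.le_add_right n k), Nat.add_sub_cancel_left]
    unfold cU
    have h1 : ((n.factorial : ℝ)) ≠ 0 := by positivity
    rw [add_comm n k]
    field_simp
    simp
    ring
  have h := Polynomial.shiftedLegendre_eval_symm n (-((x - 1) / 2))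
  rw [key, key, show 1 - -((x - 1) / 2) = (x + 1) / 2 by ring] at h
  rw [← h]
  unfold legendreP cU
  refine Finset.sum_congr rfl fun k hk => ?_
  rw [neg_pow ((x - 1) / 2), add_comm n k]
  have : ((-1 : ℝ) ^ k) * (-1) ^ k = 1 := by rw [← mul_pow]; simp
  simp only [add_zero]
  field_simp
  linear_combination (-((x - 1) / 2) ^ k) * this

lemma legendreP_contDiff (n : ℕ) : ContDiff ℝ ⊤ (legendreP n) := by
  unfold legendreP
  fun_prop

lemma legendreP_hasDeriv (n m : ℕ) (x : ℝ) :
    HasDerivAt (iteratedDeriv m (legendreP n)) (iteratedDeriv (m + 1) (legendreP n) x) x := by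
  rw [iteratedDeriv_succ]
  apply DifferentiableAt.hasDerivAt
  exact ((legendreP_contDiff n).differentiable_iteratedDeriv m (by exact_mod_cast WithTop.coe_lt_top _)) x

noncomputable def cK (n m : ℕ) : ℝ := (-1 : ℝ) ^ n * ((n + m).factorial : ℝ) / ((n - m).factorial : ℝ)

lemma cK_succ (n m : ℕ) (hm : m < n) :
    cK n (m + 1) = cK n m * (((n : ℝ) + m + 1) * ((n : ℝ) - m)) := by
  obtain ⟨d, rfl⟩ : ∃ d, n = m + 1 + d := ⟨n - (m + 1), by omega⟩
  unfold cK
  have e1 : m + 1 + d - (m + 1) = d := by omega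
  have e2 : m + 1 + d - m = d + 1 := by omega
  have e3 : m + 1 + d + (m + 1) = (m + 1 + d + m) + 1 := by omega
  rw [e1, e2, e3, Nat.factorial_succ (m + 1 + d + m), Nat.factorial_succ d]
  have h2 : ((d.factorial : ℝ)) ≠ 0 := by positivity
  have h5 : (d : ℝ) + 1 ≠ 0 := by positivity
  push_cast
  field_simp
  ring

lemma legendreP_iter (n m : ℕ) (hmn : m ≤ n) : ∀ x : ℝ, 1 < x →
    iteratedDeriv m (legendreP n) x = cK n m * ((x - 1) ^ (-(m : ℤ)) *
      ∑ k ∈ Finset.range (n + 1), cU n m k * 1 * ((x + 1) / 2) ^ k) := by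
  induction m with
  | zero =>
    intro x hx
    rw [iteratedDeriv_zero, legendreP_symm]
    have : ((n.factorial : ℝ)) ≠ 0 := by positivity
    simp [cK, this]
  | succ m ih =>
    intro x hx
    rw [iteratedDeriv_succ]
    have hev : iteratedDeriv m (legendreP n) =ᶠ[nhds x] fun x => cK n m * ((x - 1) ^ (-(m : ℤ)) *
      ∑ k ∈ Finset.range (n + 1), cU n m k * 1 * ((x + 1) / 2) ^ k) := by
      filter_upwards [lt_mem_nhds hx] with y hy using ih (by omega) y hy
    rw [hev.deriv_eq, ((ladder n m (fun _ => 1) x hx).const_mul (cK n m)).deriv, cK_succ n m hmn,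
      mul_assoc (cK n m), mul_left_comm (((n : ℝ) + m + 1) * ((n : ℝ) - m)),
      Finset.mul_sum _ _ (((n : ℝ) + m + 1) * ((n : ℝ) - m))]
    congr 2
    refine Finset.sum_congr rfl fun k _ => ?_
    rw [cU_succ_right]
    have h6 : (k : ℝ) + m + 1 ≠ 0 := by positivity
    field_simp
    ring

lemma psi_succ (j : ℕ) : psi (j + 2) = psi (j + 1) + 1 / ((j : ℝ) + 1) := by
  simp only [psi, harm, Nat.add_sub_cancel, show j + 2 - 1 = j + 1 by omega, Finset.sum_range_succ]
  ring

noncomputable def cH (n m k : ℕ) : ℝ := 2 * psi (k + n + 1) - psi (k + m + 1)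

lemma B_deriv (n m : ℕ) (hm : m < n) (x : ℝ) (hx : 1 < x) :
    HasDerivAt (fun x : ℝ => cK n m * ((x - 1) ^ (-(m : ℤ)) *
      ∑ k ∈ Finset.range (n + 1), cU n m k * cH n m k * ((x + 1) / 2) ^ k))
     (cK n (m + 1) * ((x - 1) ^ (-((m + 1 : ℕ) : ℤ)) *
      ∑ k ∈ Finset.range (n + 1), cU n (m + 1) k * cH n (m + 1) k * ((x + 1) / 2) ^ k)
      - iteratedDeriv m (legendreP n) x / (x - 1)
      + (1 / ((n : ℝ) + m + 1) + 1 / ((n : ℝ) - m)) * iteratedDeriv (m + 1) (legendreP n) x) x := by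
  refine ((ladder n m (cH n m) x hx).const_mul (cK n m)).congr_deriv ?_
  symm
  have hx0 : x - 1 ≠ 0 := by linarith
  have hnm : (n : ℝ) - m ≠ 0 := by
    have : (m : ℝ) < n := by exact_mod_cast hm
    linarith
  have hnm' : (n : ℝ) + m + 1 ≠ 0 := by positivity
  have e : (-((m + 1 : ℕ) : ℤ)) = -(m : ℤ) - 1 := by push_cast; ring
  rw [legendreP_iter n m hm.le x hx, legendreP_iter n (m + 1) hm x hx, cK_succ n m hm, e,
    zpow_sub_one₀ hx0]
  set z := (x - 1) ^ (-(m : ℤ))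
  set s := (x + 1) / 2
  have key : ∑ k ∈ Finset.range (n + 1), cU n m k *
      (((k : ℝ) - m) * cH n m k
        + ((k : ℝ) + n + 1) * ((n : ℝ) - k) / ((k : ℝ) + m + 1) * cH n m (k + 1)) * s ^ k
      = (((n : ℝ) + m + 1) * ((n : ℝ) - m)) *
        ∑ k ∈ Finset.range (n + 1), cU n (m + 1) k * cH n (m + 1) k * s ^ k
      - ∑ k ∈ Finset.range (n + 1), cU n m k * 1 * s ^ k
      + (2 * n + 1) * ∑ k ∈ Finset.range (n + 1), cU n (m + 1) k * 1 * s ^ k := by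
    rw [Finset.mul_sum, Finset.mul_sum, ← Finset.sum_sub_distrib, ← Finset.sum_add_distrib]
    refine Finset.sum_congr rfl fun k _ => ?_
    have h6 : (k : ℝ) + m + 1 ≠ 0 := by positivity
    have h7 : (k : ℝ) + n + 1 ≠ 0 := by positivity
    have a1 : cH n m (k + 1) = cH n m k + 2 / ((k : ℝ) + n + 1) - 1 / ((k : ℝ) + m + 1) := by
      unfold cH
      have e1 : k + 1 + n + 1 = (k + n) + 2 := by omega
      have e2 : k + 1 + m + 1 = (k + m) + 2 := by omega
      rw [e1, e2, psi_succ, psi_succ]; push_cast; ring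
    have a2 : cH n (m + 1) k = cH n m k - 1 / ((k : ℝ) + m + 1) := by
      unfold cH
      have e2 : k + (m + 1) + 1 = (k + m) + 2 := by omega
      rw [e2, psi_succ]; push_cast; ring
    rw [a1, a2, cU_succ_right]
    field_simp
    ring
  rw [key]
  field_simp
  ring

noncomputable def cA (n m : ℕ) (x : ℝ) : ℝ := (-1 : ℝ) ^ (n + m) * (2 : ℝ) ^ (-(m : ℤ)) *
          ∑ k ∈ Finset.range (n - m + 1),
            (-1 : ℝ) ^ k * ((k + n + m).factorial : ℝ) /
                ((k.factorial : ℝ) * ((k + m).factorial : ℝ) * ((n - m - k).factorial : ℝ)) *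
              (2 * psi (k + n + m + 1) - psi (k + m + 1)) * ((x + 1) / 2) ^ k

lemma A_deriv (n m : ℕ) (hm : m < n) (x : ℝ) : HasDerivAt (cA n m) (cA n (m + 1) x) x := by
  obtain ⟨d, rfl⟩ : ∃ d, n = m + 1 + d := ⟨n - (m + 1), by omega⟩
  set n := m + 1 + d with hn
  have e1 : n - (m + 1) = d := by omega
  have e2 : n - m = d + 1 := by omega
  unfold cA
  have := HasDerivAt.const_mul ((-1 : ℝ) ^ (n + m) * (2 : ℝ) ^ (-(m : ℤ)))
    (HasDerivAt.fun_sum (u := Finset.range (n - m + 1)) (x := x)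
    (A := fun k (x : ℝ) => (-1 : ℝ) ^ k * ((k + n + m).factorial : ℝ) /
                ((k.factorial : ℝ) * ((k + m).factorial : ℝ) * ((n - m - k).factorial : ℝ)) *
              (2 * psi (k + n + m + 1) - psi (k + m + 1)) * ((x + 1) / 2) ^ k)
    (fun k _ => HasDerivAt.const_mul _
      ((((hasDerivAt_id x).add_const 1).div_const 2).pow k)))
  refine this.congr_deriv ?_
  symm
  rw [e1, e2, Finset.sum_range_succ' _ (d + 1)]
  simp only [Nat.cast_zero, zero_mul, mul_zero, add_zero]
  have e : (-((m + 1 : ℕ) : ℤ)) = -(m : ℤ) - 1 := by push_cast; ring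
  rw [e, zpow_sub_one₀ two_ne_zero, Finset.mul_sum, Finset.mul_sum]
  refine Finset.sum_congr rfl fun k _ => ?_
  have f1 : k + n + (m + 1) = k + 1 + n + m := by omega
  have f2 : k + (m + 1) = k + 1 + m := by omega
  have f3 : d + 1 - (k + 1) = d - k := by omega
  rw [f1, f2, f3, Nat.add_sub_cancel, Nat.factorial_succ k]
  have h4 : (k : ℝ) + 1 ≠ 0 := by positivity
  simp only [id]
  push_cast
  field_simp
  ring

lemma main_aux (n m : ℕ) (hmn : m ≤ n) : ∀ x : ℝ, 1 < x →
    iteratedDeriv m (fun y => legendreP n y * Real.log (y - 1)) x =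
      iteratedDeriv m (legendreP n) x * Real.log (x - 1)
      + (psi (n + m + 1) - psi (n - m + 1)) * iteratedDeriv m (legendreP n) x
      - cA n m x
      + cK n m * ((x - 1) ^ (-(m : ℤ)) *
      ∑ k ∈ Finset.range (n + 1), cU n m k * cH n m k * ((x + 1) / 2) ^ k) := by
  induction m with
  | zero =>
    intro x hx
    have h : ((n.factorial : ℝ)) ≠ 0 := by positivity
    simp [cK, h, cA, cU, cH]
  | succ m ih =>
    intro x hx
    have hx0 : x - 1 ≠ 0 := by linarith
    rw [iteratedDeriv_succ]
    have hev : iteratedDeriv m (fun y => legendreP n y * Real.log (y - 1)) =ᶠ[nhds x] fun x => 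
      iteratedDeriv m (legendreP n) x * Real.log (x - 1)
      + (psi (n + m + 1) - psi (n - m + 1)) * iteratedDeriv m (legendreP n) x
      - cA n m x
      + cK n m * ((x - 1) ^ (-(m : ℤ)) *
      ∑ k ∈ Finset.range (n + 1), cU n m k * cH n m k * ((x + 1) / 2) ^ k) := by
      filter_upwards [lt_mem_nhds hx] with y hy using ih (by omega) y hy
    have dl : HasDerivAt (fun x : ℝ => Real.log (x - 1)) (1 / (x - 1)) x :=
      ((hasDerivAt_id x).sub_const 1).log hx0
    have dP := legendreP_hasDeriv n m x
    have dd := (((dP.fun_mul dl).fun_add (dP.const_mul (psi (n + m + 1) - psi (n - m + 1)))).fun_sub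
      (A_deriv n m hmn x)).fun_add (B_deriv n m hmn x hx)
    rw [hev.deriv_eq, dd.deriv]
    obtain ⟨d, hd⟩ : ∃ d, n = m + 1 + d := ⟨n - (m + 1), by omega⟩
    have g1 : psi (n + (m + 1) + 1) = psi (n + m + 1) + 1 / ((n : ℝ) + m + 1) := by
      have := psi_succ (n + m); push_cast at this; exact this
    have g2 : psi (n - m + 1) = psi (n - (m + 1) + 1) + 1 / ((n : ℝ) - m) := by
      have := psi_succ d
      have e1 : n - (m + 1) = d := by omega
      have e2 : n - m = d + 1 := by omega
      rw [e1, e2, this, hd]; push_cast; ring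
    rw [g1, g2]
    ring

theorem stmt_5 (m n : ℕ) (hmn : m ≤ n) (x : ℝ) (hx : 1 < x) :
    iteratedDeriv m (fun y => legendreP n y * Real.log (y - 1)) x =
      iteratedDeriv m (legendreP n) x * Real.log (x - 1)
      + (psi (n + m + 1) - psi (n - m + 1)) * iteratedDeriv m (legendreP n) x
      - (-1 : ℝ) ^ (n + m) * (2 : ℝ) ^ (-(m : ℤ)) *
          ∑ k ∈ Finset.range (n - m + 1),
            (-1 : ℝ) ^ k * ((k + n + m).factorial : ℝ) /
                ((k.factorial : ℝ) * ((k + m).factorial : ℝ) * ((n - m - k).factorial : ℝ)) *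
              (2 * psi (k + n + m + 1) - psi (k + m + 1)) * ((x + 1) / 2) ^ k
      + (-1 : ℝ) ^ n * ((n + m).factorial : ℝ) / ((n - m).factorial : ℝ) *
            (x - 1) ^ (-(m : ℤ)) *
          ∑ k ∈ Finset.range (n + 1),
            (-1 : ℝ) ^ k * ((k + n).factorial : ℝ) /
                ((k.factorial : ℝ) * ((k + m).factorial : ℝ) * ((n - k).factorial : ℝ)) *
              (2 * psi (k + n + 1) - psi (k + m + 1)) * ((x + 1) / 2) ^ k := by
  have h := main_aux n m hmn x hx
  unfold cA cK cU cH at h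
  rw [h, ← mul_assoc]
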